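/- Let C : ℝ → ℝ be strictly monotonically increasing on [0, ∞). For every ξ ∈ [0,1] and all x, x' ∈ [0, L1max(ξ)]: if C(x') ≥ C(x) then C(L2(ξ, x')) ≤ C(L2(ξ, x)), and if C(L2(ξ, x')) ≤ C(L2(ξ, x)) then C(x') ≥ C(x). (Lemma 2: the rate pairs (C(x), C(L2(ξ, x))) on the proposed rate region boundary are Pareto-optimal.) -/

import Mathlib

/-!
Inverting the linear map, a point `D(ξ) + (a, b)` has parallelogram coordinates
`s = ξ + (h12 b - h22 a) / d` and `t = ξ + (h21 a - h11 b) / d`, where `d = h12 h21 - h11 h22 > 0`.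
Both coefficient pairs have opposite signs, so the extreme values over a centred rectangle of sides
`x, y` are attained at the two corners `±(x, -y) / 2`, and the rectangle fits in `P` exactly when
`h12 y + h22 x ≤ K` and `h11 y + h21 x ≤ K`, with `K = 2 d min(ξ, 1 - ξ)` (`rect_subset_iff`).
Hence `L2(ξ, x) = min ((K - h22 x) / h12) ((K - h21 x) / h11)` on `[0, L1max(ξ)]`
(`L2fun_eq`), which is nonnegative and strictly decreasing in `x`. Composing with the strictly
increasing `C` gives both implications.
-/

noncomputable section

/-- The parallelogram `P = { (h11·s + h12·t, h21·s + h22·t) : s,t ∈ [0,1] }`. -/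
def Pgram (h11 h12 h21 h22 : ℝ) : Set (ℝ × ℝ) :=
  { v | ∃ s ∈ Set.Icc (0:ℝ) 1, ∃ t ∈ Set.Icc (0:ℝ) 1,
      v = (h11 * s + h12 * t, h21 * s + h22 * t) }

/-- The point `D(ξ)` on the diagonal of the parallelogram. -/
def Dpt (h11 h12 h21 h22 ξ : ℝ) : ℝ × ℝ := (ξ * (h11 + h12), ξ * (h21 + h22))

/-- Closed axis-aligned rectangle with horizontal side `L1`, vertical side `L2`, midpoint `c`. -/
def Rect (L1 L2 : ℝ) (c : ℝ × ℝ) : Set (ℝ × ℝ) :=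
  { v | |v.1 - c.1| ≤ L1 / 2 ∧ |v.2 - c.2| ≤ L2 / 2 }

/-- `L1max(ξ)`: sup of horizontal segment lengths centered at `D(ξ)` fitting inside `P`. -/
def L1max (h11 h12 h21 h22 ξ : ℝ) : ℝ :=
  sSup { L1 | L1 ≥ 0 ∧ Rect L1 0 (Dpt h11 h12 h21 h22 ξ) ⊆ Pgram h11 h12 h21 h22 }

/-- `L2(ξ, x)`: sup of vertical side lengths of rectangles with horizontal side `x`
centered at `D(ξ)` fitting inside `P`. -/
def L2fun (h11 h12 h21 h22 ξ x : ℝ) : ℝ :=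
  sSup { L2 | L2 ≥ 0 ∧ Rect x L2 (Dpt h11 h12 h21 h22 ξ) ⊆ Pgram h11 h12 h21 h22 }

/-- Rectangle with horizontal side `x` extended vertically upwards from `c` by `L2`. -/
def RectUp (x L2 : ℝ) (c : ℝ × ℝ) : Set (ℝ × ℝ) :=
  { v | |v.1 - c.1| ≤ x / 2 ∧ c.2 ≤ v.2 ∧ v.2 ≤ c.2 + L2 }

/-- Rectangle with horizontal side `x` extended vertically downwards from `c` by `L2`. -/
def RectDown (x L2 : ℝ) (c : ℝ × ℝ) : Set (ℝ × ℝ) :=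
  { v | |v.1 - c.1| ≤ x / 2 ∧ c.2 - L2 ≤ v.2 ∧ v.2 ≤ c.2 }

/-- `L2up(ξ, x)`: sup of upward one-sided vertical extensions. -/
def L2up (h11 h12 h21 h22 ξ x : ℝ) : ℝ :=
  sSup { L2 | L2 ≥ 0 ∧ RectUp x L2 (Dpt h11 h12 h21 h22 ξ) ⊆ Pgram h11 h12 h21 h22 }

/-- `L2down(ξ, x)`: sup of downward one-sided vertical extensions. -/
def L2down (h11 h12 h21 h22 ξ x : ℝ) : ℝ :=
  sSup { L2 | L2 ≥ 0 ∧ RectDown x L2 (Dpt h11 h12 h21 h22 ξ) ⊆ Pgram h11 h12 h21 h22 }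

/-- Room left around `D(ξ)`: twice the absolute determinant times the distance from `ξ` to the
endpoints of `[0, 1]`. -/
def slack (h11 h12 h21 h22 ξ : ℝ) : ℝ := 2 * (h12 * h21 - h11 * h22) * min ξ (1 - ξ)

theorem slack_le (h11 h12 h21 h22 ξ : ℝ) (hdet : h11 * h22 - h12 * h21 < 0) :
    slack h11 h12 h21 h22 ξ ≤ 2 * (h12 * h21 - h11 * h22) * ξ ∧
      slack h11 h12 h21 h22 ξ ≤ 2 * (h12 * h21 - h11 * h22) * (1 - ξ) := by
  have hd : 0 ≤ 2 * (h12 * h21 - h11 * h22) := by linarith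
  exact ⟨mul_le_mul_of_nonneg_left (min_le_left _ _) hd,
    mul_le_mul_of_nonneg_left (min_le_right _ _) hd⟩

theorem le_slack {h11 h12 h21 h22 ξ z : ℝ}
    (h0 : z ≤ 2 * (h12 * h21 - h11 * h22) * ξ)
    (h1 : z ≤ 2 * (h12 * h21 - h11 * h22) * (1 - ξ)) : z ≤ slack h11 h12 h21 h22 ξ := by
  unfold slack
  rcases min_choice ξ (1 - ξ) with h | h <;> rw [h] <;> assumption

/-- The parallelogram as an intersection of two strips. -/
theorem mem_Pgram_iff (h11 h12 h21 h22 : ℝ) (hdet : h11 * h22 - h12 * h21 < 0) (v : ℝ × ℝ) :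
    v ∈ Pgram h11 h12 h21 h22 ↔
      (0 ≤ h12 * v.2 - h22 * v.1 ∧ h12 * v.2 - h22 * v.1 ≤ h12 * h21 - h11 * h22) ∧
      (0 ≤ h21 * v.1 - h11 * v.2 ∧ h21 * v.1 - h11 * v.2 ≤ h12 * h21 - h11 * h22) := by
  have hd : 0 < h12 * h21 - h11 * h22 := by linarith
  constructor
  · rintro ⟨s, ⟨hs0, hs1⟩, t, ⟨ht0, ht1⟩, rfl⟩
    have e1 : h12 * (h21 * s + h22 * t) - h22 * (h11 * s + h12 * t)
        = (h12 * h21 - h11 * h22) * s := by ring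
    have e2 : h21 * (h11 * s + h12 * t) - h11 * (h21 * s + h22 * t)
        = (h12 * h21 - h11 * h22) * t := by ring
    dsimp only
    rw [e1, e2]
    exact ⟨⟨mul_nonneg hd.le hs0, mul_le_of_le_one_right hd.le hs1⟩,
      ⟨mul_nonneg hd.le ht0, mul_le_of_le_one_right hd.le ht1⟩⟩
  · rintro ⟨⟨hs0, hs1⟩, ht0, ht1⟩
    refine ⟨(h12 * v.2 - h22 * v.1) / (h12 * h21 - h11 * h22),
      ⟨div_nonneg hs0 hd.le, (div_le_one hd).2 hs1⟩,
      (h21 * v.1 - h11 * v.2) / (h12 * h21 - h11 * h22),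
      ⟨div_nonneg ht0 hd.le, (div_le_one hd).2 ht1⟩, ?_⟩
    have hne := hd.ne'
    apply Prod.ext
    · dsimp only
      rw [← mul_div_assoc, ← mul_div_assoc, ← add_div, eq_div_iff hne]
      ring
    · dsimp only
      rw [← mul_div_assoc, ← mul_div_assoc, ← add_div, eq_div_iff hne]
      ring

/-- A centred rectangle fits in the parallelogram iff its two corners in the direction `±(x, -y)`
respect the strip constraints. -/
theorem rect_subset_iff (h11 h12 h21 h22 : ℝ)
    (hpos11 : 0 < h11) (hpos12 : 0 < h12) (hpos21 : 0 < h21) (hpos22 : 0 < h22)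
    (hdet : h11 * h22 - h12 * h21 < 0) (ξ x y : ℝ) (hx : 0 ≤ x) (hy : 0 ≤ y) :
    Rect x y (Dpt h11 h12 h21 h22 ξ) ⊆ Pgram h11 h12 h21 h22 ↔
      h12 * y + h22 * x ≤ slack h11 h12 h21 h22 ξ ∧
        h11 * y + h21 * x ≤ slack h11 h12 h21 h22 ξ := by
  constructor
  · intro h
    have hx2 : 0 ≤ x / 2 := by positivity
    have hy2 : 0 ≤ y / 2 := by positivity
    have hp := h (a := (ξ * (h11 + h12) + x / 2, ξ * (h21 + h22) - y / 2))
      ⟨by simp [Dpt, abs_of_nonneg hx2], by simp [Dpt, abs_of_nonneg hy2]⟩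
    have hq := h (a := (ξ * (h11 + h12) - x / 2, ξ * (h21 + h22) + y / 2))
      ⟨by simp [Dpt, abs_of_nonneg hx2], by simp [Dpt, abs_of_nonneg hy2]⟩
    rw [mem_Pgram_iff _ _ _ _ hdet] at hp hq
    dsimp only at hp hq
    obtain ⟨⟨p1, p2⟩, p3, p4⟩ := hp
    obtain ⟨⟨q1, q2⟩, q3, q4⟩ := hq
    constructor <;> apply le_slack <;> linarith
  · rintro ⟨k1, k2⟩ v ⟨hv1, hv2⟩
    obtain ⟨m0, m1⟩ := slack_le h11 h12 h21 h22 ξ hdet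
    obtain ⟨a1, a2⟩ := abs_le.1 hv1
    obtain ⟨b1, b2⟩ := abs_le.1 hv2
    simp only [Dpt] at a1 a2 b1 b2
    rw [mem_Pgram_iff _ _ _ _ hdet]
    have u1 := mul_le_mul_of_nonneg_left a1 hpos22.le
    have u2 := mul_le_mul_of_nonneg_left a2 hpos22.le
    have u3 := mul_le_mul_of_nonneg_left a1 hpos21.le
    have u4 := mul_le_mul_of_nonneg_left a2 hpos21.le
    have w1 := mul_le_mul_of_nonneg_left b1 hpos12.le
    have w2 := mul_le_mul_of_nonneg_left b2 hpos12.le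
    have w3 := mul_le_mul_of_nonneg_left b1 hpos11.le
    have w4 := mul_le_mul_of_nonneg_left b2 hpos11.le
    refine ⟨⟨?_, ?_⟩, ?_, ?_⟩ <;> linarith

/-- Widths up to `L1max(ξ)` satisfy the constraints of a degenerate rectangle of height `0`. -/
theorem le_slack_of_le_L1max (h11 h12 h21 h22 : ℝ)
    (hpos11 : 0 < h11) (hpos12 : 0 < h12) (hpos21 : 0 < h21) (hpos22 : 0 < h22)
    (hdet : h11 * h22 - h12 * h21 < 0) (ξ x : ℝ) (hξ : ξ ∈ Set.Icc (0:ℝ) 1)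
    (hx : x ≤ L1max h11 h12 h21 h22 ξ) :
    h22 * x ≤ slack h11 h12 h21 h22 ξ ∧ h21 * x ≤ slack h11 h12 h21 h22 ξ := by
  have hK : 0 ≤ slack h11 h12 h21 h22 ξ :=
    mul_nonneg (by linarith) (le_min hξ.1 (by linarith [hξ.2]))
  have hle : L1max h11 h12 h21 h22 ξ ≤
      min (slack h11 h12 h21 h22 ξ / h22) (slack h11 h12 h21 h22 ξ / h21) := by
    refine Real.sSup_le ?_ (le_min (div_nonneg hK hpos22.le) (div_nonneg hK hpos21.le))
    rintro L ⟨hL, hR⟩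
    obtain ⟨r1, r2⟩ := (rect_subset_iff h11 h12 h21 h22 hpos11 hpos12 hpos21 hpos22 hdet ξ L 0
      hL le_rfl).1 hR
    refine le_min ?_ ?_
    · rw [le_div_iff₀ hpos22]; linarith
    · rw [le_div_iff₀ hpos21]; linarith
  obtain ⟨l1, l2⟩ := le_min_iff.1 (hx.trans hle)
  rw [le_div_iff₀ hpos22] at l1
  rw [le_div_iff₀ hpos21] at l2
  constructor <;> linarith

/-- Closed form of `L2(ξ, x)` on `[0, L1max(ξ)]`; its value there is nonnegative. -/
theorem L2fun_eq (h11 h12 h21 h22 : ℝ)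
    (hpos11 : 0 < h11) (hpos12 : 0 < h12) (hpos21 : 0 < h21) (hpos22 : 0 < h22)
    (hdet : h11 * h22 - h12 * h21 < 0) (ξ x : ℝ) (hξ : ξ ∈ Set.Icc (0:ℝ) 1)
    (hx : x ∈ Set.Icc (0:ℝ) (L1max h11 h12 h21 h22 ξ)) :
    L2fun h11 h12 h21 h22 ξ x = min ((slack h11 h12 h21 h22 ξ - h22 * x) / h12)
        ((slack h11 h12 h21 h22 ξ - h21 * x) / h11) ∧
      0 ≤ L2fun h11 h12 h21 h22 ξ x := by
  obtain ⟨k1, k2⟩ := le_slack_of_le_L1max h11 h12 h21 h22 hpos11 hpos12 hpos21 hpos22 hdet ξ x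
    hξ hx.2
  have hnn : 0 ≤ min ((slack h11 h12 h21 h22 ξ - h22 * x) / h12)
      ((slack h11 h12 h21 h22 ξ - h21 * x) / h11) :=
    le_min (div_nonneg (by linarith) hpos12.le) (div_nonneg (by linarith) hpos11.le)
  have hset : {L2 | L2 ≥ 0 ∧ Rect x L2 (Dpt h11 h12 h21 h22 ξ) ⊆ Pgram h11 h12 h21 h22} =
      Set.Icc 0 (min ((slack h11 h12 h21 h22 ξ - h22 * x) / h12)
        ((slack h11 h12 h21 h22 ξ - h21 * x) / h11)) := by
    ext y
    simp only [Set.mem_ofPred_eq, Set.mem_Icc, ge_iff_le]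
    refine and_congr_right fun hy => ?_
    rw [rect_subset_iff h11 h12 h21 h22 hpos11 hpos12 hpos21 hpos22 hdet ξ x y hx.1 hy,
      le_min_iff, le_div_iff₀ hpos12, le_div_iff₀ hpos11, le_sub_iff_add_le, le_sub_iff_add_le,
      mul_comm h12 y, mul_comm h11 y]
  have heq : L2fun h11 h12 h21 h22 ξ x = min ((slack h11 h12 h21 h22 ξ - h22 * x) / h12)
      ((slack h11 h12 h21 h22 ξ - h21 * x) / h11) := by
    unfold L2fun
    rw [hset, csSup_Icc hnn]
  exact ⟨heq, heq ▸ hnn⟩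

theorem L2fun_strictAntiOn (h11 h12 h21 h22 : ℝ)
    (hpos11 : 0 < h11) (hpos12 : 0 < h12) (hpos21 : 0 < h21) (hpos22 : 0 < h22)
    (hdet : h11 * h22 - h12 * h21 < 0) (ξ : ℝ) (hξ : ξ ∈ Set.Icc (0:ℝ) 1) :
    StrictAntiOn (L2fun h11 h12 h21 h22 ξ) (Set.Icc (0:ℝ) (L1max h11 h12 h21 h22 ξ)) := by
  intro x hx x' hx' hlt
  rw [(L2fun_eq h11 h12 h21 h22 hpos11 hpos12 hpos21 hpos22 hdet ξ x hξ hx).1,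
    (L2fun_eq h11 h12 h21 h22 hpos11 hpos12 hpos21 hpos22 hdet ξ x' hξ hx').1]
  exact min_lt_min
    (div_lt_div_of_pos_right (sub_lt_sub_left (mul_lt_mul_of_pos_left hlt hpos22) _) hpos12)
    (div_lt_div_of_pos_right (sub_lt_sub_left (mul_lt_mul_of_pos_left hlt hpos21) _) hpos11)

theorem stmt16 (h11 h12 h21 h22 : ℝ)
    (hpos11 : 0 < h11) (hpos12 : 0 < h12) (hpos21 : 0 < h21) (hpos22 : 0 < h22)
    (hdet : h11 * h22 - h12 * h21 < 0)
    (C : ℝ → ℝ) (hC : StrictMonoOn C (Set.Ici (0:ℝ))) :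
    ∀ ξ ∈ Set.Icc (0:ℝ) 1,
      ∀ x ∈ Set.Icc (0:ℝ) (L1max h11 h12 h21 h22 ξ),
      ∀ x' ∈ Set.Icc (0:ℝ) (L1max h11 h12 h21 h22 ξ),
        (C x ≤ C x' →
          C (L2fun h11 h12 h21 h22 ξ x') ≤ C (L2fun h11 h12 h21 h22 ξ x)) ∧
        (C (L2fun h11 h12 h21 h22 ξ x') ≤ C (L2fun h11 h12 h21 h22 ξ x) →
          C x ≤ C x') := by
  intro ξ hξ x hx x' hx'
  have hiff : C (L2fun h11 h12 h21 h22 ξ x') ≤ C (L2fun h11 h12 h21 h22 ξ x) ↔ C x ≤ C x' := by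
    rw [hC.le_iff_le hx.1 hx'.1,
      hC.le_iff_le
        (L2fun_eq h11 h12 h21 h22 hpos11 hpos12 hpos21 hpos22 hdet ξ x' hξ hx').2
        (L2fun_eq h11 h12 h21 h22 hpos11 hpos12 hpos21 hpos22 hdet ξ x hξ hx).2,
      (L2fun_strictAntiOn h11 h12 h21 h22 hpos11 hpos12 hpos21 hpos22 hdet ξ hξ).le_iff_ge hx' hx]
  exact ⟨hiff.2, hiff.1⟩
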